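/- arXiv:2409.15448 — 2 statements merged into one kernel-verified Lean document; each statement's English description precedes it below -/
import Mathlib

section
/- Let n ∈ ℕ, let F : ℝⁿ → ℝ be any function, and let x^{lb,1}, x^{ub,1}, x^{lb,2}, x^{ub,2}, α¹, α² : Fin n → ℝ satisfy, for all i: x^{lb,1}_i ≤ x^{lb,2}_i ≤ x^{ub,2}_i ≤ x^{ub,1}_i (so the rectangle X² = [x^{lb,2}, x^{ub,2}] is contained in X¹ = [x^{lb,1}, x^{ub,1}]) and 0 ≤ α²_i ≤ α¹_i. Define F̆^{(l)}(x) := F(x) + Σ_i α^{(l)}_i (x^{lb,l}_i − x_i)(x^{ub,l}_i − x_i) for l ∈ {1,2}. Then for every x ∈ X², F̆^{(1)}(x) ≤ F̆^{(2)}(x) ≤ F(x). -/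
/-- Proposition 4 (Tighter Convex Underestimators): on a nested subrectangle
`X² ⊆ X¹` with smaller coefficients `α²ᵢ ≤ α¹ᵢ`, the underestimator on `X²` is
tighter: `F̆⁽¹⁾(x) ≤ F̆⁽²⁾(x) ≤ F(x)` for all `x ∈ X²`. -/
theorem alphaBB_tighter_underestimator
    (n : ℕ) (F : (Fin n → ℝ) → ℝ)
    (xlb1 xub1 xlb2 xub2 α1 α2 : Fin n → ℝ)
    (hnest : ∀ i, xlb1 i ≤ xlb2 i ∧ xlb2 i ≤ xub2 i ∧ xub2 i ≤ xub1 i)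
    (hα : ∀ i, 0 ≤ α2 i ∧ α2 i ≤ α1 i)
    (x : Fin n → ℝ)
    (hx : ∀ i, xlb2 i ≤ x i ∧ x i ≤ xub2 i) :
    F x + ∑ i, α1 i * (xlb1 i - x i) * (xub1 i - x i) ≤
      F x + ∑ i, α2 i * (xlb2 i - x i) * (xub2 i - x i) ∧
    F x + ∑ i, α2 i * (xlb2 i - x i) * (xub2 i - x i) ≤ F x := by
  constructor
  · have h : ∑ i, α1 i * (xlb1 i - x i) * (xub1 i - x i) ≤
        ∑ i, α2 i * (xlb2 i - x i) * (xub2 i - x i) := by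
      apply Finset.sum_le_sum
      intro i _
      obtain ⟨h1, _, h3⟩ := hnest i
      obtain ⟨ha, hb⟩ := hα i
      obtain ⟨hl, hu⟩ := hx i
      have h4 : (x i - xlb2 i) * (xub2 i - x i) ≤ (x i - xlb1 i) * (xub1 i - x i) :=
        mul_le_mul (by linarith) (by linarith) (by linarith) (by linarith)
      have h5 : 0 ≤ (x i - xlb2 i) * (xub2 i - x i) :=
        mul_nonneg (by linarith) (by linarith)
      have h6 := mul_le_mul hb h4 h5 (ha.trans hb)
      linarith
    linarith
  · have h : ∑ i, α2 i * (xlb2 i - x i) * (xub2 i - x i) ≤ 0 := by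
      apply Finset.sum_nonpos
      intro i _
      obtain ⟨ha, _⟩ := hα i
      obtain ⟨hl, hu⟩ := hx i
      exact mul_nonpos_of_nonpos_of_nonneg
        (mul_nonpos_of_nonneg_of_nonpos ha (by linarith)) (by linarith)
    linarith
end

section
/- Let n ∈ ℕ, let F, h : ℝⁿ → ℝ, let x^lb, x^ub, α^F, α^H : Fin n → ℝ with x^lb_i ≤ x^ub_i, α^F_i ≥ 0 and α^H_i ≥ 0 for all i, and let X := {x ∈ ℝⁿ : x^lb_i ≤ x_i ≤ x^ub_i for all i}. Define F̆(x) := F(x) + Σ_i α^F_i (x^lb_i − x_i)(x^ub_i − x_i) and H̆(x) := −h(x) + Σ_i α^H_i (x^lb_i − x_i)(x^ub_i − x_i). Suppose that for every x ∈ X with H̆(x) ≤ 0 one has F̆(x) ≥ 0. Then for every x ∈ X with h(x) ≥ 0 one has F(x) ≥ 0. -/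
/-- Correctness of Case (A) of the verification algorithm: if the αBB
convexified problem has nonnegative value over its feasible set on the
rectangle `X`, then the original objective `F` is nonnegative wherever
`h ≥ 0` on `X`. -/
theorem alphaBB_caseA_sound
    (n : ℕ) (F h : (Fin n → ℝ) → ℝ)
    (xlb xub αF αH : Fin n → ℝ)
    (hx : ∀ i, xlb i ≤ xub i)
    (hαF : ∀ i, 0 ≤ αF i) (hαH : ∀ i, 0 ≤ αH i)
    (X : Set (Fin n → ℝ))
    (hX : X = {x | ∀ i, xlb i ≤ x i ∧ x i ≤ xub i})
    (Fbreve Hbreve : (Fin n → ℝ) → ℝ)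
    (hFbreve : ∀ x, Fbreve x = F x + ∑ i, αF i * (xlb i - x i) * (xub i - x i))
    (hHbreve : ∀ x, Hbreve x = -h x + ∑ i, αH i * (xlb i - x i) * (xub i - x i))
    (hconv : ∀ x ∈ X, Hbreve x ≤ 0 → 0 ≤ Fbreve x) :
    ∀ x ∈ X, 0 ≤ h x → 0 ≤ F x := by
  intro x hxX hh
  have hmem : ∀ i, xlb i ≤ x i ∧ x i ≤ xub i := by
    rw [hX] at hxX
    exact hxX
  have key : ∀ a : Fin n → ℝ, (∀ i, 0 ≤ a i) →
      ∑ i, a i * (xlb i - x i) * (xub i - x i) ≤ 0 := by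
    intro a ha
    apply Finset.sum_nonpos
    intro i _
    exact mul_nonpos_of_nonpos_of_nonneg
      (mul_nonpos_of_nonneg_of_nonpos (ha i) (sub_nonpos.mpr (hmem i).1))
      (sub_nonneg.mpr (hmem i).2)
  have h1 := key αF hαF
  have h2 := key αH hαH
  have h3 := hconv x hxX (by rw [hHbreve]; linarith)
  rw [hFbreve] at h3
  linarith
end
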